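/- Let k ≥ 2 be an integer. There is an integer p₀ such that for every integer p ≥ p₀ and all sufficiently large n (depending on k and p), if G is an n-vertex W_{2k+1}-free simple graph attaining the maximum spectral radius among all n-vertex W_{2k+1}-free graphs and V(G) = S ⊔ T is a maximum cut of G, then every vertex v of G has degree d(v) > (1/2 − 1/p)n, and the induced subgraphs G[S] and G[T] contain no copy of the star K_{1,k}; in particular every vertex u ∈ S satisfies d_S(u) ≤ k−1 and every vertex u ∈ T satisfies d_T(u) ≤ k−1. -/

import Mathlib

/-- The wheel graph on `t` vertices: vertex `0` joined to every vertex of the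
cycle `1, 2, …, t-1` (with `t-1` adjacent to `1`). -/
def wheelGraph (t : ℕ) : SimpleGraph (Fin t) where
  Adj a b := a ≠ b ∧ (a.val = 0 ∨ b.val = 0 ∨ a.val + 1 = b.val ∨ b.val + 1 = a.val ∨
      (a.val = 1 ∧ b.val = t - 1) ∨ (b.val = 1 ∧ a.val = t - 1))
  symm := by
    constructor
    intro a b h
    exact ⟨h.1.symm, by tauto⟩
  loopless := by
    constructor
    intro a h
    exact h.1 rfl

/-- `G` contains a copy of `F`, i.e. a subgraph isomorphic to `F`. -/
def ContainsCopy {α β : Type*} (F : SimpleGraph α) (G : SimpleGraph β) : Prop :=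
  ∃ f : α ↪ β, ∀ a b, F.Adj a b → G.Adj (f a) (f b)

/-- `G` is `W_t`-free: it contains no subgraph isomorphic to the wheel on `t` vertices. -/
def WheelFree (t : ℕ) {n : ℕ} (G : SimpleGraph (Fin n)) : Prop :=
  ¬ ContainsCopy (wheelGraph t) G

/-- The spectral radius of `G`: the largest eigenvalue of its adjacency matrix. -/
noncomputable def lam1 {n : ℕ} (G : SimpleGraph (Fin n)) : ℝ := by
  classical
  exact sSup {μ : ℝ | Module.End.HasEigenvalue (Matrix.toLin' (G.adjMatrix ℝ)) μ}

/-- The number of edges of a graph on a finite vertex type. -/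
noncomputable def edgeCount {V : Type*} [Fintype V] (G : SimpleGraph V) : ℕ := by
  classical
  exact G.edgeFinset.card

/-- The degree of a vertex. -/
noncomputable def deg {n : ℕ} (G : SimpleGraph (Fin n)) (v : Fin n) : ℕ := by
  classical
  exact G.degree v

/-- The number of neighbours of `v` inside the set `A`. -/
noncomputable def degIn {n : ℕ} (G : SimpleGraph (Fin n)) (A : Finset (Fin n)) (v : Fin n) : ℕ := by
  classical
  exact (A.filter fun u => G.Adj v u).card

/-- The number of edges of `G` with one endpoint in `S` and the other outside `S`. -/
noncomputable def cutCount {n : ℕ} (G : SimpleGraph (Fin n)) (S : Finset (Fin n)) : ℕ := by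
  classical
  exact ((Finset.univ : Finset (Fin n × Fin n)).filter
    fun p => G.Adj p.1 p.2 ∧ p.1 ∈ S ∧ p.2 ∉ S).card

/-- `(S, T)` is a maximum cut of `G`. -/
def IsMaxCut {n : ℕ} (G : SimpleGraph (Fin n)) (S T : Finset (Fin n)) : Prop :=
  T = Sᶜ ∧ ∀ S' : Finset (Fin n), cutCount G S' ≤ cutCount G S

/-- `G` attains the maximum spectral radius among all `n`-vertex `W_t`-free graphs. -/
def IsSpexWheel (t : ℕ) {n : ℕ} (G : SimpleGraph (Fin n)) : Prop :=
  WheelFree t G ∧ ∀ H : SimpleGraph (Fin n), WheelFree t H → lam1 H ≤ lam1 G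

/-- `G` attains the maximum number of edges among all `n`-vertex `W_t`-free graphs. -/
def IsExWheel (t : ℕ) {n : ℕ} (G : SimpleGraph (Fin n)) : Prop :=
  WheelFree t G ∧ ∀ H : SimpleGraph (Fin n), WheelFree t H → edgeCount H ≤ edgeCount G

/-- The real adjacency matrix, with classical decidability. -/
noncomputable def adjM {n : ℕ} (G : SimpleGraph (Fin n)) : Matrix (Fin n) (Fin n) ℝ := by
  classical
  exact G.adjMatrix ℝ

/-- The neighbourhood, as a finset. -/
noncomputable def nbr {n : ℕ} (G : SimpleGraph (Fin n)) (v : Fin n) : Finset (Fin n) := by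
  classical
  exact Finset.univ.filter fun u => G.Adj v u

lemma mem_nbr {n : ℕ} {G : SimpleGraph (Fin n)} {v u : Fin n} : u ∈ nbr G v ↔ G.Adj v u := by
  simp [nbr]

lemma lam1_eq {n : ℕ} (G : SimpleGraph (Fin n)) :
    lam1 G = sSup {μ : ℝ | Module.End.HasEigenvalue (Matrix.toLin' (adjM G)) μ} := by
  unfold lam1 adjM
  rfl

lemma adjM_mulVec {n : ℕ} (G : SimpleGraph (Fin n)) (y : Fin n → ℝ) (v : Fin n) :
    (adjM G).mulVec y v = ∑ w ∈ nbr G v, y w := by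
  classical
  simp only [adjM, Matrix.mulVec, dotProduct, nbr, SimpleGraph.adjMatrix_apply, ite_mul, one_mul,
    zero_mul, Finset.sum_filter]

lemma adjM_herm {n : ℕ} (G : SimpleGraph (Fin n)) : (adjM G).IsHermitian := by
  classical
  rw [Matrix.IsHermitian, Matrix.conjTranspose_eq_transpose_of_trivial]
  exact SimpleGraph.isSymm_adjMatrix G

lemma eig_le {n : ℕ} (G : SimpleGraph (Fin n)) {μ : ℝ} {x : Fin n → ℝ} (hx : x ≠ 0)
    (h : (adjM G).mulVec x = μ • x) : μ ≤ lam1 G := by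
  rw [lam1_eq]
  apply le_csSup
  · exact (Module.End.finite_hasEigenvalue _).bddAbove
  · apply Module.End.hasEigenvalue_of_hasEigenvector (x := x)
    rw [Module.End.hasEigenvector_iff, Module.End.mem_eigenspace_iff]
    exact ⟨by simpa using h, hx⟩

lemma rayleigh {n : ℕ} (G : SimpleGraph (Fin n)) (y : Fin n → ℝ) :
    ∑ v, y v * ∑ w ∈ nbr G v, y w ≤ lam1 G * ∑ v, y v ^ 2 := by
  classical
  set B : Matrix (Fin n) (Fin n) ℝ := lam1 G • (1 : Matrix (Fin n) (Fin n) ℝ) - adjM G with hB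
  have hBh : B.IsHermitian := by
    apply Matrix.IsHermitian.sub _ (adjM_herm G)
    rw [Matrix.IsHermitian, Matrix.conjTranspose_eq_transpose_of_trivial]
    simp
  have hps : B.PosSemidef := by
    rw [hBh.posSemidef_iff_eigenvalues_nonneg]
    intro i
    have h1 := hBh.mulVec_eigenvectorBasis i
    set x : Fin n → ℝ := ⇑(hBh.eigenvectorBasis i) with hx
    have hne : x ≠ 0 := by
      intro h0
      have := hBh.eigenvectorBasis.orthonormal.ne_zero i
      apply this
      ext j
      exact congrFun h0 j
    have h2 : (adjM G).mulVec x = (lam1 G - hBh.eigenvalues i) • x := by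
      have h3 : B.mulVec x = lam1 G • x - (adjM G).mulVec x := by
        rw [hB, Matrix.sub_mulVec, Matrix.smul_mulVec, Matrix.one_mulVec]
      rw [sub_smul, ← h1, h3]
      abel
    have := eig_le G hne h2
    simp only [Pi.zero_apply]
    linarith
  have h := hps.dotProduct_mulVec_nonneg y
  rw [hB, Matrix.sub_mulVec, Matrix.smul_mulVec, Matrix.one_mulVec, dotProduct_sub,
    dotProduct_smul] at h
  simp only [dotProduct, adjM_mulVec, star_trivial, smul_eq_mul] at h
  have h3 : ∑ v, y v ^ 2 = ∑ v, y v * y v := Finset.sum_congr rfl fun v _ => sq _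
  rw [h3]
  linarith

/-- Nonnegative sub-eigenvector normalised to have maximum one. -/
lemma exists_sub {n : ℕ} (hn : 0 < n) (G : SimpleGraph (Fin n)) (hpos : 0 ≤ lam1 G) :
    ∃ (y : Fin n → ℝ) (z : Fin n), (∀ v, 0 ≤ y v) ∧ (∀ v, y v ≤ 1) ∧ y z = 1 ∧
      ∀ v, lam1 G * y v ≤ ∑ w ∈ nbr G v, y w := by
  classical
  have : Nonempty (Fin n) := ⟨⟨0, hn⟩⟩
  have hmem : lam1 G ∈ {μ : ℝ | Module.End.HasEigenvalue (Matrix.toLin' (adjM G)) μ} := by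
    rw [lam1_eq]
    apply Set.Nonempty.csSup_mem _ (Module.End.finite_hasEigenvalue _)
    have i : Fin n := ⟨0, hn⟩
    refine ⟨(adjM_herm G).eigenvalues i, ?_⟩
    apply Module.End.hasEigenvalue_of_hasEigenvector (x := ⇑((adjM_herm G).eigenvectorBasis i))
    rw [Module.End.hasEigenvector_iff, Module.End.mem_eigenspace_iff]
    refine ⟨by simpa using (adjM_herm G).mulVec_eigenvectorBasis i, ?_⟩
    intro h0
    apply (adjM_herm G).eigenvectorBasis.orthonormal.ne_zero i
    ext j
    exact congrFun h0 j
  obtain ⟨x, hx⟩ := Module.End.HasEigenvalue.exists_hasEigenvector hmem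
  rw [Module.End.hasEigenvector_iff, Module.End.mem_eigenspace_iff] at hx
  obtain ⟨hx1, hx0⟩ := hx
  obtain ⟨z, hz⟩ := Finite.exists_max (fun v => |x v|)
  have hzpos : 0 < |x z| := by
    by_contra hc
    apply hx0
    funext v
    have h1 := hz v
    have h2 := abs_nonneg (x v)
    exact abs_eq_zero.mp (by linarith)
  refine ⟨fun v => |x v| / |x z|, z, fun v => by positivity, fun v => ?_, by field_simp, fun v => ?_⟩
  · rw [div_le_one hzpos]
    exact hz v
  · have h1 : ∑ w ∈ nbr G v, x w = lam1 G * x v := by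
      rw [← adjM_mulVec]
      have := congrFun hx1 v
      simpa using this
    rw [← Finset.sum_div, ← mul_div_assoc]
    gcongr
    calc lam1 G * |x v| = |lam1 G * x v| := by rw [abs_mul, abs_of_nonneg hpos]
      _ = |∑ w ∈ nbr G v, x w| := by rw [h1]
      _ ≤ _ := Finset.abs_sum_le_sum_abs _ _

lemma degIn_eq {n : ℕ} (G : SimpleGraph (Fin n)) (A : Finset (Fin n)) (v : Fin n) :
    degIn G A v = (A ∩ nbr G v).card := by
  classical
  unfold degIn
  congr 1
  ext u
  simp [mem_nbr]

lemma degIn_le {n : ℕ} (G : SimpleGraph (Fin n)) (A : Finset (Fin n)) (v : Fin n) :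
    degIn G A v ≤ A.card := by
  rw [degIn_eq]
  exact Finset.card_le_card Finset.inter_subset_left

lemma deg_eq {n : ℕ} (G : SimpleGraph (Fin n)) (v : Fin n) : deg G v = (nbr G v).card := by
  classical
  unfold deg
  rw [← SimpleGraph.card_neighborFinset_eq_degree]
  congr 1
  ext u
  simp [mem_nbr]

lemma degIn_add_compl {n : ℕ} (G : SimpleGraph (Fin n)) (A : Finset (Fin n)) (v : Fin n) :
    degIn G A v + degIn G Aᶜ v = (nbr G v).card := by
  classical
  rw [degIn_eq, degIn_eq, Finset.inter_comm A, Finset.inter_comm Aᶜ,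
    ← Finset.sdiff_eq_inter_compl]
  exact Finset.card_inter_add_card_sdiff _ _

lemma degIn_sum_comm {n : ℕ} (G : SimpleGraph (Fin n)) (A B : Finset (Fin n)) :
    ∑ v ∈ A, degIn G B v = ∑ w ∈ B, degIn G A w := by
  classical
  have h := Finset.sum_card_bipartiteAbove_eq_sum_card_bipartiteBelow (s := A) (t := B) G.Adj
  unfold Finset.bipartiteAbove Finset.bipartiteBelow at h
  have h1 : ∀ v, degIn G B v = (B.filter fun u => G.Adj v u).card := fun v => by
    unfold degIn
    congr
  have h2 : ∀ v, degIn G A v = (A.filter fun u => G.Adj u v).card := fun v => by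
    unfold degIn
    congr 1
    ext u
    simp [G.adj_comm]
  simp only [h1, h2]
  exact h

lemma cutCount_eq {n : ℕ} (G : SimpleGraph (Fin n)) (S : Finset (Fin n)) :
    cutCount G S = ∑ v ∈ S, degIn G Sᶜ v := by
  classical
  unfold cutCount
  rw [Finset.card_eq_sum_card_fiberwise (f := Prod.fst) (t := S)]
  · apply Finset.sum_congr rfl
    intro v hv
    rw [degIn_eq]
    apply Finset.card_bij (fun p _ => p.2)
    · rintro ⟨a, b⟩ h
      simp only [Finset.mem_filter, Finset.mem_univ, true_and] at h
      obtain ⟨⟨h1, h2, h3⟩, rfl⟩ := h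
      simp [mem_nbr, h1, h3]
    · rintro ⟨a, b⟩ h ⟨c, d⟩ h' hbd
      simp only [Finset.mem_filter, Finset.mem_univ, true_and] at h h'
      simp only [Prod.mk.injEq]
      exact ⟨h.2.trans h'.2.symm, hbd⟩
    · intro b hb
      simp only [Finset.mem_inter, Finset.mem_compl, mem_nbr] at hb
      exact ⟨(v, b), by simp [hb.1, hb.2, hv], rfl⟩
  · rintro ⟨a, b⟩ h
    simp at h
    simpa using h.2.1

lemma cut_compl {n : ℕ} (G : SimpleGraph (Fin n)) (S : Finset (Fin n)) :
    cutCount G Sᶜ = cutCount G S := by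
  classical
  rw [cutCount_eq, cutCount_eq, compl_compl, degIn_sum_comm]

lemma maxcut_symm {n : ℕ} {G : SimpleGraph (Fin n)} {S T : Finset (Fin n)} (h : IsMaxCut G S T) :
    IsMaxCut G T S := by
  obtain ⟨rfl, h⟩ := h
  refine ⟨by simp, fun S' => ?_⟩
  rw [cut_compl]
  exact h S'

lemma maxcut_local {n : ℕ} {G : SimpleGraph (Fin n)} {S T : Finset (Fin n)}
    (h : IsMaxCut G S T) {v : Fin n} (hv : v ∈ S) : degIn G S v ≤ degIn G T v := by
  classical
  obtain ⟨rfl, h⟩ := h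
  have h1 := h (S.erase v)
  rw [cutCount_eq, cutCount_eq, ← Finset.add_sum_erase S _ hv] at h1
  have h2 : ∀ w ∈ S.erase v, degIn G (S.erase v)ᶜ w = degIn G Sᶜ w + degIn G {v} w := by
    intro w _
    rw [degIn_eq, degIn_eq, degIn_eq, Finset.compl_erase, Finset.insert_eq, Finset.union_inter_distrib_right,
      Finset.card_union_of_disjoint, add_comm]
    rw [Finset.disjoint_left]
    intro a ha hb
    simp only [Finset.mem_inter, Finset.mem_singleton, Finset.mem_compl] at ha hb
    exact hb.1 (ha.1 ▸ hv)
  rw [Finset.sum_congr rfl h2, Finset.sum_add_distrib, degIn_sum_comm G (S.erase v) {v},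
    Finset.sum_singleton] at h1
  have h3 : degIn G (S.erase v) v = degIn G S v := by
    rw [degIn_eq, degIn_eq]
    congr 1
    ext a
    simp only [Finset.mem_inter, Finset.mem_erase, mem_nbr]
    constructor
    · rintro ⟨⟨_, h⟩, h'⟩
      exact ⟨h, h'⟩
    · rintro ⟨h, h'⟩
      exact ⟨⟨h'.ne', h⟩, h'⟩
  omega

/-- A hub joined to both sides of a `K_{k,k}` yields the wheel. -/
lemma no_wheel {n k : ℕ} {G : SimpleGraph (Fin n)} (hk : 2 ≤ k) (hG : WheelFree (2 * k + 1) G)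
    (u : Fin n) (P Q : Finset (Fin n)) (hP : k ≤ P.card) (hQ : k ≤ Q.card)
    (huP : ∀ a ∈ P, G.Adj u a) (huQ : ∀ b ∈ Q, G.Adj u b)
    (hPQ : ∀ a ∈ P, ∀ b ∈ Q, G.Adj a b) : False := by
  classical
  obtain ⟨a⟩ : Nonempty (Fin k ↪ P) := by
    apply Function.Embedding.nonempty_of_card_le
    simpa using hP
  obtain ⟨b⟩ : Nonempty (Fin k ↪ Q) := by
    apply Function.Embedding.nonempty_of_card_le
    simpa using hQ
  have hfa : ∀ i j, ((a i : P) : Fin n) = a j → i = j := fun i j h => a.injective (Subtype.ext h)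
  have hfb : ∀ i j, ((b i : Q) : Fin n) = b j → i = j := fun i j h => b.injective (Subtype.ext h)
  have hab : ∀ i j, G.Adj (a i) (b j) := fun i j => hPQ _ (a i).2 _ (b j).2
  have hua : ∀ i, G.Adj u (a i) := fun i => huP _ (a i).2
  have hub : ∀ i, G.Adj u (b i) := fun i => huQ _ (b i).2
  let f : Fin (2 * k + 1) → Fin n := fun i =>
    if h0 : i.val = 0 then u
    else if i.val % 2 = 1 then a ⟨(i.val - 1) / 2, by omega⟩
    else b ⟨(i.val - 1) / 2, by omega⟩
  have f0 : ∀ i, i.val = 0 → f i = u := fun i h => dif_pos h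
  have f1 : ∀ i, i.val ≠ 0 → i.val % 2 = 1 → ∃ j : Fin k, f i = a j ∧ i.val = 2 * j.val + 1 := by
    intro i h h'
    refine ⟨⟨(i.val - 1) / 2, by omega⟩, (dif_neg h).trans (if_pos h'), ?_⟩
    simp only
    omega
  have f2 : ∀ i, i.val ≠ 0 → i.val % 2 ≠ 1 → ∃ j : Fin k, f i = b j ∧ i.val = 2 * j.val + 2 := by
    intro i h h'
    refine ⟨⟨(i.val - 1) / 2, by omega⟩, (dif_neg h).trans (if_neg h'), ?_⟩
    simp only
    omega
  apply hG
  refine ⟨⟨f, ?_⟩, ?_⟩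
  · intro i j hij
    ext
    by_cases hi0 : i.val = 0 <;> by_cases hj0 : j.val = 0
    · omega
    · exfalso
      rw [f0 i hi0] at hij
      by_cases hj : j.val % 2 = 1
      · obtain ⟨j', h1, h2⟩ := f1 j hj0 hj
        rw [h1] at hij
        exact (hua j').ne hij
      · obtain ⟨j', h1, h2⟩ := f2 j hj0 hj
        rw [h1] at hij
        exact (hub j').ne hij
    · exfalso
      rw [f0 j hj0] at hij
      by_cases hi : i.val % 2 = 1
      · obtain ⟨j', h1, h2⟩ := f1 i hi0 hi
        rw [h1] at hij
        exact (hua j').ne hij.symm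
      · obtain ⟨j', h1, h2⟩ := f2 i hi0 hi
        rw [h1] at hij
        exact (hub j').ne hij.symm
    · by_cases hi : i.val % 2 = 1 <;> by_cases hj : j.val % 2 = 1
      · obtain ⟨i', h1, h2⟩ := f1 i hi0 hi
        obtain ⟨j', h3, h4⟩ := f1 j hj0 hj
        rw [h1, h3] at hij
        rw [h2, h4, hfa _ _ hij]
      · obtain ⟨i', h1, h2⟩ := f1 i hi0 hi
        obtain ⟨j', h3, h4⟩ := f2 j hj0 hj
        rw [h1, h3] at hij
        exact absurd hij (hab _ _).ne
      · obtain ⟨i', h1, h2⟩ := f2 i hi0 hi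
        obtain ⟨j', h3, h4⟩ := f1 j hj0 hj
        rw [h1, h3] at hij
        exact absurd hij.symm (hab _ _).ne
      · obtain ⟨i', h1, h2⟩ := f2 i hi0 hi
        obtain ⟨j', h3, h4⟩ := f2 j hj0 hj
        rw [h1, h3] at hij
        rw [h2, h4, hfb _ _ hij]
  · intro i j hij
    show G.Adj (f i) (f j)
    obtain ⟨hne, hij⟩ := hij
    have hne' : i.val ≠ j.val := fun h => hne (Fin.ext h)
    by_cases hi0 : i.val = 0
    · rw [f0 i hi0]
      by_cases hj : j.val % 2 = 1
      · obtain ⟨j', h1, h2⟩ := f1 j (by omega) hj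
        rw [h1]
        exact hua j'
      · obtain ⟨j', h1, h2⟩ := f2 j (by omega) hj
        rw [h1]
        exact hub j'
    by_cases hj0 : j.val = 0
    · rw [f0 j hj0]
      by_cases hi : i.val % 2 = 1
      · obtain ⟨j', h1, h2⟩ := f1 i (by omega) hi
        rw [h1]
        exact (hua j').symm
      · obtain ⟨j', h1, h2⟩ := f2 i (by omega) hi
        rw [h1]
        exact (hub j').symm
    by_cases hi : i.val % 2 = 1
    · obtain ⟨i', h1, h2⟩ := f1 i hi0 hi
      obtain ⟨j', h3, h4⟩ := f2 j hj0 (by omega)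
      rw [h1, h3]
      exact hab _ _
    · obtain ⟨i', h1, h2⟩ := f2 i hi0 hi
      obtain ⟨j', h3, h4⟩ := f1 j hj0 (by omega)
      rw [h1, h3]
      exact (hab _ _).symm

/-- Few edges inside a neighbourhood. -/
lemma kst (k : ℕ) (hk : 2 ≤ k) (ε : ℝ) (hε : 0 < ε) :
    ∃ N : ℕ, ∀ n : ℕ, N ≤ n → ∀ G : SimpleGraph (Fin n), WheelFree (2 * k + 1) G →
      ∀ z, ((∑ u ∈ nbr G z, degIn G (nbr G z) u : ℕ) : ℝ) ≤ ε * (n : ℝ) ^ 2 := by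
  classical
  obtain ⟨M, hM⟩ := exists_nat_ge (4 * k / ε)
  obtain ⟨N, hN⟩ := exists_nat_ge (2 * M / ε + 4 * (2 ^ M * k) / ε + 1)
  refine ⟨N, fun n hn G hG z => ?_⟩
  by_contra hc
  push Not at hc
  have hk' : (2 : ℝ) ≤ k := by exact_mod_cast hk
  have hnN : 2 * M / ε + 4 * (2 ^ M * k) / ε + 1 ≤ (n : ℝ) := hN.trans (by exact_mod_cast hn)
  have hMk : 4 * (k : ℝ) ≤ ε * M := by
    rw [div_le_iff₀ hε] at hM
    linarith
  have hMpos : (0 : ℝ) < M := by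
    by_contra h
    nlinarith
  have ht1 : 0 ≤ 2 * M / ε := by positivity
  have ht2 : 0 ≤ 4 * (2 ^ M * k) / ε := by positivity
  have hn1 : 2 * (M : ℝ) ≤ ε * n := by
    have : 2 * M / ε ≤ (n : ℝ) := by linarith
    rw [div_le_iff₀ hε] at this
    linarith
  have hn2 : 4 * (2 ^ M * (k : ℝ)) ≤ ε * n := by
    have : 4 * (2 ^ M * k) / ε ≤ (n : ℝ) := by linarith
    rw [div_le_iff₀ hε] at this
    linarith
  have hnpos : (0 : ℝ) < n := by linarith
  set A := nbr G z with hA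
  have hAn : (A.card : ℝ) ≤ n := by
    have := Finset.card_le_univ A
    rw [Fintype.card_fin] at this
    exact_mod_cast this
  set H := A.filter (fun u => ε / 2 * n ≤ (degIn G A u : ℝ)) with hH
  have hHcard : (M : ℝ) ≤ H.card := by
    have h1 : ((∑ u ∈ A, degIn G A u : ℕ) : ℝ) ≤ ∑ u ∈ A, ((if u ∈ H then (n : ℝ) else 0) + ε / 2 * n) := by
      push_cast
      apply Finset.sum_le_sum
      intro u hu
      have h2 : (degIn G A u : ℝ) ≤ n := le_trans (by exact_mod_cast degIn_le G A u) hAn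
      have h3 : 0 ≤ ε / 2 * n := by positivity
      split_ifs with h
      · linarith
      · simp only [hH, Finset.mem_filter, hu, true_and, not_le] at h
        linarith
    rw [Finset.sum_add_distrib, ← Finset.sum_filter, Finset.sum_const, Finset.sum_const,
      nsmul_eq_mul, nsmul_eq_mul] at h1
    have h4 : A.filter (fun u => u ∈ H) = H := by
      ext u
      simp only [hH, Finset.mem_filter]
      tauto
    rw [h4] at h1
    have h5 : (A.card : ℝ) * (ε / 2 * n) ≤ n * (ε / 2 * n) := by gcongr
    have h6 : ε / 2 * n * n < H.card * n := by nlinarith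
    have h7 := lt_of_mul_lt_mul_right h6 hnpos.le
    linarith
  obtain ⟨P, hPH, hPcard⟩ := Finset.exists_subset_card_eq (s := H) (n := M) (by exact_mod_cast hHcard)
  set Q := A.filter (fun w => k ≤ degIn G P w) with hQ
  have hQcard : 2 ^ M * (k : ℝ) ≤ Q.card := by
    have h1 : (M : ℝ) * (ε / 2 * n) ≤ ((∑ w ∈ A, degIn G P w : ℕ) : ℝ) := by
      rw [degIn_sum_comm]
      push_cast
      rw [← hPcard, ← nsmul_eq_mul]
      apply Finset.card_nsmul_le_sum
      intro u hu
      exact (Finset.mem_filter.mp (hPH hu)).2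
    have h2 : ((∑ w ∈ A, degIn G P w : ℕ) : ℝ) ≤ ∑ w ∈ A, ((if w ∈ Q then (M : ℝ) else 0) + k) := by
      push_cast
      apply Finset.sum_le_sum
      intro u hu
      have h2 : (degIn G P u : ℝ) ≤ M := by
        rw [← hPcard]
        exact_mod_cast degIn_le G P u
      split_ifs with h
      · linarith
      · simp only [hQ, Finset.mem_filter, hu, true_and, not_le] at h
        have : (degIn G P u : ℝ) < k := by exact_mod_cast h
        linarith
    rw [Finset.sum_add_distrib, ← Finset.sum_filter, Finset.sum_const, Finset.sum_const,
      nsmul_eq_mul, nsmul_eq_mul] at h2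
    have h4 : A.filter (fun u => u ∈ Q) = Q := by
      ext u
      simp only [hQ, Finset.mem_filter]
      tauto
    rw [h4] at h2
    have h5 : (A.card : ℝ) * k ≤ n * k := by gcongr
    have h6 : ε / 4 * n * M ≤ Q.card * M := by nlinarith
    have h7 := le_of_mul_le_mul_right h6 hMpos
    linarith
  obtain ⟨R, hR, hfib⟩ := Finset.exists_le_card_fiber_of_mul_le_card_of_maps_to
    (s := Q) (t := P.powerset) (f := fun w => P ∩ nbr G w) (n := k)
    (fun w _ => by simp) ⟨∅, by simp⟩
    (by
      rw [Finset.card_powerset, hPcard]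
      exact_mod_cast hQcard)
  set F := Q.filter (fun w => P ∩ nbr G w = R) with hF
  have hFne : F.Nonempty := by
    rw [← Finset.card_pos]
    omega
  obtain ⟨w0, hw0⟩ := hFne
  have hRcard : k ≤ R.card := by
    have h1 := Finset.mem_filter.mp hw0
    have h2 := (Finset.mem_filter.mp h1.1).2
    rw [degIn_eq, h1.2] at h2
    exact h2
  refine no_wheel hk hG z R F hRcard hfib ?_ ?_ ?_
  · intro a ha
    have h1 : a ∈ H := hPH (Finset.mem_powerset.mp hR ha)
    have h2 := (Finset.mem_filter.mp h1).1
    exact mem_nbr.mp h2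
  · intro b hb
    have h1 := (Finset.mem_filter.mp hb).1
    exact mem_nbr.mp (Finset.mem_filter.mp h1).1
  · intro a ha b hb
    have h1 := (Finset.mem_filter.mp hb).2
    rw [← h1] at ha
    exact (mem_nbr.mp (Finset.mem_inter.mp ha).2).symm

/-- A balanced complete bipartite graph. -/
def parityGraph (n : ℕ) : SimpleGraph (Fin n) where
  Adj a b := a.val % 2 ≠ b.val % 2
  symm := by
    constructor
    intro a b h
    exact h.symm
  loopless := by
    constructor
    intro a h
    exact h rfl

lemma lam_ge {n k : ℕ} (hn : 0 < n) (hk : 2 ≤ k) {G : SimpleGraph (Fin n)}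
    (hG : IsSpexWheel (2 * k + 1) G) : ((n : ℝ) - 1) / 2 ≤ lam1 G := by
  classical
  have hfree : WheelFree (2 * k + 1) (parityGraph n) := by
    rintro ⟨f, hf⟩
    have h01 := hf ⟨0, by omega⟩ ⟨1, by omega⟩ ⟨by simp, by simp⟩
    have h02 := hf ⟨0, by omega⟩ ⟨2, by omega⟩ ⟨by simp, by simp⟩
    have h12 := hf ⟨1, by omega⟩ ⟨2, by omega⟩ ⟨by simp, by simp⟩
    simp only [parityGraph] at h01 h02 h12
    omega
  refine le_trans ?_ (hG.2 _ hfree)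
  have h := rayleigh (parityGraph n) (fun _ => 1)
  simp only [Finset.sum_const, nsmul_eq_mul, mul_one, one_mul, one_pow, Finset.card_univ,
    Fintype.card_fin] at h
  have hd : ∀ v : Fin n, ((n : ℝ) - 1) / 2 ≤ ((nbr (parityGraph n) v).card : ℝ) := by
    intro v
    have h1 : n / 2 ≤ (nbr (parityGraph n) v).card := by
      have h2 : (Finset.univ : Finset (Fin (n / 2))).card ≤ (nbr (parityGraph n) v).card := by
        apply Finset.card_le_card_of_injOn
          (fun j => (⟨2 * j.val + (1 - v.val % 2), by omega⟩ : Fin n))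
        · intro j _
          simp only [Finset.mem_coe, mem_nbr, parityGraph]
          omega
        · intro i _ j _ hij
          simp only [Fin.mk.injEq] at hij
          ext
          omega
      simpa using h2
    have h2 : n ≤ 2 * (n / 2) + 1 := by omega
    have h3 : (n : ℝ) ≤ 2 * ((n / 2 : ℕ) : ℝ) + 1 := by exact_mod_cast h2
    have h4 : ((n / 2 : ℕ) : ℝ) ≤ ((nbr (parityGraph n) v).card : ℝ) := by exact_mod_cast h1
    linarith
  have h5 : (n : ℝ) * (((n : ℝ) - 1) / 2) ≤ ∑ v : Fin n, ((nbr (parityGraph n) v).card : ℝ) := by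
    have := Finset.card_nsmul_le_sum Finset.univ
      (fun v => ((nbr (parityGraph n) v).card : ℝ)) (((n : ℝ) - 1) / 2) (fun v _ => hd v)
    simpa using this
  have hnpos : (0 : ℝ) < n := by exact_mod_cast hn
  have h6 : (n : ℝ) * (((n : ℝ) - 1) / 2) ≤ n * lam1 (parityGraph n) := by linarith
  exact le_of_mul_le_mul_left h6 hnpos

/-- Common neighbours inside `B`. -/
lemma common {n : ℕ} (G : SimpleGraph (Fin n)) (P B : Finset (Fin n)) (m : ℝ)
    (h : ∀ a ∈ P, (B.card : ℝ) - m ≤ degIn G B a) :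
    ∃ Q ⊆ B, (∀ a ∈ P, ∀ b ∈ Q, G.Adj a b) ∧ (B.card : ℝ) - P.card * m ≤ Q.card := by
  classical
  induction P using Finset.induction_on with
  | empty => exact ⟨B, subset_rfl, by simp, by simp⟩
  | insert a P ha ih =>
    obtain ⟨Q, hQB, hadj, hcard⟩ := ih (fun a ha => h a (Finset.mem_insert_of_mem ha))
    refine ⟨Q ∩ nbr G a, Finset.inter_subset_left.trans hQB, ?_, ?_⟩
    · intro c hc b hb
      rw [Finset.mem_inter] at hb
      rcases Finset.mem_insert.mp hc with rfl | hc
      · exact mem_nbr.mp hb.2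
      · exact hadj c hc b hb.1
    · have h1 := h a (Finset.mem_insert_self _ _)
      rw [degIn_eq] at h1
      have h2 := Finset.card_inter_add_card_sdiff Q (nbr G a)
      have h3 := Finset.card_inter_add_card_sdiff B (nbr G a)
      have h4 : (Q \ nbr G a).card ≤ (B \ nbr G a).card :=
        Finset.card_le_card (Finset.sdiff_subset_sdiff hQB subset_rfl)
      rw [Finset.card_insert_of_notMem ha]
      have h2' : ((Q ∩ nbr G a).card : ℝ) + ((Q \ nbr G a).card : ℝ) = Q.card := by exact_mod_cast h2
      have h3' : ((B ∩ nbr G a).card : ℝ) + ((B \ nbr G a).card : ℝ) = B.card := by exact_mod_cast h3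
      have h4' : ((Q \ nbr G a).card : ℝ) ≤ ((B \ nbr G a).card : ℝ) := by exact_mod_cast h4
      push_cast
      linarith

lemma cut_large {n : ℕ} {G : SimpleGraph (Fin n)} {S T : Finset (Fin n)} (hmax : IsMaxCut G S T)
    (e : ℝ) (y : Fin n → ℝ) (z : Fin n) (hl : 0 ≤ lam1 G) (h1 : ∀ v, y v ≤ 1) (hz : y z = 1)
    (hsub : ∀ v, lam1 G * y v ≤ ∑ w ∈ nbr G v, y w)
    (he : ((∑ u ∈ nbr G z, degIn G (nbr G z) u : ℕ) : ℝ) ≤ e) :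
    lam1 G ^ 2 ≤ e + cutCount G S := by
  classical
  have h2 : lam1 G ^ 2 ≤ ∑ w ∈ nbr G z, ((nbr G w).card : ℝ) := by
    calc lam1 G ^ 2 = lam1 G * (lam1 G * y z) := by rw [hz]; ring
      _ ≤ lam1 G * ∑ w ∈ nbr G z, y w := by gcongr; exact hsub z
      _ = ∑ w ∈ nbr G z, lam1 G * y w := Finset.mul_sum _ _ _
      _ ≤ _ := by
        apply Finset.sum_le_sum
        intro w _
        refine (hsub w).trans ?_
        calc ∑ u ∈ nbr G w, y u ≤ ∑ u ∈ nbr G w, (1 : ℝ) := Finset.sum_le_sum fun u _ => h1 u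
          _ = _ := by simp
  have h3 : ∑ w ∈ nbr G z, (nbr G w).card
      = ∑ u ∈ nbr G z, degIn G (nbr G z) u + cutCount G (nbr G z) := by
    rw [cutCount_eq, ← Finset.sum_add_distrib]
    exact Finset.sum_congr rfl fun u _ => (degIn_add_compl G _ u).symm
  have h4 : ∑ w ∈ nbr G z, ((nbr G w).card : ℝ)
      = ((∑ u ∈ nbr G z, degIn G (nbr G z) u : ℕ) : ℝ) + cutCount G (nbr G z) := by
    exact_mod_cast h3
  have h5 : (cutCount G (nbr G z) : ℝ) ≤ cutCount G S := by exact_mod_cast hmax.2 _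
  linarith

lemma card_add {n : ℕ} {G : SimpleGraph (Fin n)} {S T : Finset (Fin n)} (hmax : IsMaxCut G S T) :
    (S.card : ℝ) + T.card = n := by
  have h := Finset.card_add_card_compl S
  rw [← hmax.1, Fintype.card_fin] at h
  exact_mod_cast h

lemma cut_le {n : ℕ} {G : SimpleGraph (Fin n)} {S T : Finset (Fin n)} (hmax : IsMaxCut G S T) :
    (cutCount G S : ℝ) ≤ S.card * T.card := by
  rw [cutCount_eq, ← hmax.1]
  have : ∑ v ∈ S, degIn G T v ≤ S.card * T.card := by
    rw [← smul_eq_mul]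
    exact Finset.sum_le_card_nsmul _ _ _ fun v _ => degIn_le _ _ _
  exact_mod_cast this

lemma size_ge {n : ℕ} {G : SimpleGraph (Fin n)} {S T : Finset (Fin n)} (hmax : IsMaxCut G S T)
    {s : ℝ} (hs : 0 < s) (hcut : (n : ℝ) ^ 2 / 4 - s ^ 2 * n ^ 2 ≤ cutCount G S) :
    (n : ℝ) / 2 - s * n ≤ S.card ∧ (S.card : ℝ) ≤ n / 2 + s * n := by
  have h1 := card_add hmax
  have h2 := cut_le hmax
  have h3 : ((S.card : ℝ) - n / 2) ^ 2 ≤ (s * n) ^ 2 := by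
    have : (T.card : ℝ) = n - S.card := by linarith
    rw [this] at h2
    nlinarith
  have h4 := abs_le.mp (abs_le_of_sq_le_sq h3 (by positivity))
  constructor <;> linarith [h4.1, h4.2]

/-- The vertices of `S` which miss more than `s * n` vertices of `T`. -/
noncomputable def badSet {n : ℕ} (G : SimpleGraph (Fin n)) (S T : Finset (Fin n)) (s : ℝ) :
    Finset (Fin n) := by
  classical
  exact S.filter fun v => (degIn G T v : ℝ) < T.card - s * n

lemma good_of {n : ℕ} {G : SimpleGraph (Fin n)} {S T : Finset (Fin n)} {s : ℝ} {v : Fin n}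
    (hv : v ∈ S) (h : v ∉ badSet G S T s) : (T.card : ℝ) - s * n ≤ degIn G T v := by
  simp only [badSet, Finset.mem_filter, hv, true_and, not_lt] at h
  exact h

lemma bad_card {n : ℕ} {G : SimpleGraph (Fin n)} {S T : Finset (Fin n)} (hmax : IsMaxCut G S T)
    (hn : 0 < n) {s : ℝ} (hs : 0 < s)
    (hcut : (n : ℝ) ^ 2 / 4 - s ^ 2 * n ^ 2 ≤ cutCount G S) :
    ((badSet G S T s).card : ℝ) ≤ s * n := by
  classical
  have hn' : (0 : ℝ) < n := by exact_mod_cast hn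
  have h1 := card_add hmax
  have h2 : (cutCount G S : ℝ) = ∑ v ∈ S, (degIn G T v : ℝ) := by
    rw [cutCount_eq, ← hmax.1]
    push_cast
    rfl
  have h3 : ∑ v ∈ S, (degIn G T v : ℝ)
      ≤ ∑ v ∈ S, ((T.card : ℝ) - if v ∈ badSet G S T s then s * n else 0) := by
    apply Finset.sum_le_sum
    intro v hv
    split_ifs with h
    · exact (Finset.mem_filter.mp h).2.le
    · have := degIn_le G T v
      rw [sub_zero]
      exact_mod_cast this
  rw [Finset.sum_sub_distrib, ← Finset.sum_filter, Finset.sum_const, Finset.sum_const,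
    nsmul_eq_mul, nsmul_eq_mul] at h3
  have h4 : S.filter (fun u => u ∈ badSet G S T s) = badSet G S T s := by
    ext u
    simp only [badSet, Finset.mem_filter]
    tauto
  rw [h4] at h3
  have h5 : (S.card : ℝ) * T.card ≤ n ^ 2 / 4 := by
    rw [← h1]
    nlinarith [sq_nonneg ((S.card : ℝ) - T.card)]
  have h6 : ((badSet G S T s).card : ℝ) * (s * n) ≤ (s * n) * (s * n) := by nlinarith
  exact le_of_mul_le_mul_right h6 (by positivity)

lemma internal_small {n k : ℕ} (hk : 2 ≤ k) {G : SimpleGraph (Fin n)} {S T : Finset (Fin n)}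
    (hG : WheelFree (2 * k + 1) G) (hmax : IsMaxCut G S T)
    (hn : 0 < n) {s : ℝ} (hs : 0 < s)
    (hcut : (n : ℝ) ^ 2 / 4 - s ^ 2 * n ^ 2 ≤ cutCount G S) {u : Fin n} (hu : u ∈ S) :
    (degIn G S u : ℝ) ≤ k * (s * n) + k := by
  classical
  by_contra hc
  push Not at hc
  have hn' : (0 : ℝ) < n := by exact_mod_cast hn
  have hk' : (2 : ℝ) ≤ k := by exact_mod_cast hk
  have hsn : 0 < s * n := by positivity
  have hb := bad_card hmax hn hs hcut
  have hP0 : k ≤ ((S ∩ nbr G u) \ badSet G S T s).card := by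
    have h1 := Finset.le_card_sdiff (badSet G S T s) (S ∩ nbr G u)
    have h2 : (S ∩ nbr G u).card ≤ ((S ∩ nbr G u) \ badSet G S T s).card + (badSet G S T s).card := by
      omega
    have h3 : ((S ∩ nbr G u).card : ℝ)
        ≤ ((S ∩ nbr G u) \ badSet G S T s).card + (badSet G S T s).card := by exact_mod_cast h2
    rw [degIn_eq] at hc
    have h4 : (k : ℝ) ≤ ((S ∩ nbr G u) \ badSet G S T s).card := by nlinarith
    exact_mod_cast h4
  obtain ⟨P, hP, hPc⟩ := Finset.exists_subset_card_eq hP0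
  have hPm : ∀ a ∈ P, a ∈ S ∧ G.Adj u a ∧ a ∉ badSet G S T s := by
    intro a ha
    have := hP ha
    simp only [Finset.mem_sdiff, Finset.mem_inter, mem_nbr] at this
    tauto
  obtain ⟨Q, hQT, hadj, hQc⟩ := common G P T (s * n)
    (fun a ha => good_of (hPm a ha).1 (hPm a ha).2.2)
  have hQ : k ≤ (Q ∩ nbr G u).card := by
    have h1 := Finset.card_inter_add_card_sdiff Q (nbr G u)
    have h2 := Finset.card_inter_add_card_sdiff T (nbr G u)
    have h3 : (Q \ nbr G u).card ≤ (T \ nbr G u).card :=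
      Finset.card_le_card (Finset.sdiff_subset_sdiff hQT subset_rfl)
    have h4 := maxcut_local hmax hu
    rw [degIn_eq G T] at h4
    have h1' : ((Q ∩ nbr G u).card : ℝ) + (Q \ nbr G u).card = Q.card := by exact_mod_cast h1
    have h2' : ((T ∩ nbr G u).card : ℝ) + (T \ nbr G u).card = T.card := by exact_mod_cast h2
    have h3' : ((Q \ nbr G u).card : ℝ) ≤ (T \ nbr G u).card := by exact_mod_cast h3
    have h4' : (degIn G S u : ℝ) ≤ (T ∩ nbr G u).card := by exact_mod_cast h4
    rw [hPc] at hQc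
    have h5 : (k : ℝ) ≤ ((Q ∩ nbr G u).card : ℝ) := by linarith
    exact_mod_cast h5
  refine no_wheel hk hG u P (Q ∩ nbr G u) hPc.ge hQ (fun a ha => (hPm a ha).2.1) ?_ ?_
  · intro b hb
    exact mem_nbr.mp (Finset.mem_inter.mp hb).2
  · intro a ha b hb
    exact hadj a ha b (Finset.mem_inter.mp hb).1

/-- Delete all edges at `v` and join `v` to `X` instead. -/
def rewire {n : ℕ} (G : SimpleGraph (Fin n)) (v : Fin n) (X : Finset (Fin n)) :
    SimpleGraph (Fin n) where
  Adj a b := (a ≠ v ∧ b ≠ v ∧ G.Adj a b) ∨ (a = v ∧ b ≠ v ∧ b ∈ X) ∨ (b = v ∧ a ≠ v ∧ a ∈ X)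
  symm := by
    constructor
    intro a b h
    rcases h with h | h | h
    · exact Or.inl ⟨h.2.1, h.1, h.2.2.symm⟩
    · exact Or.inr (Or.inr h)
    · exact Or.inr (Or.inl h)
  loopless := by
    constructor
    intro a h
    rcases h with h | h | h
    · exact G.loopless.irrefl a h.2.2
    · exact h.2.1 h.1
    · exact h.2.1 h.1

lemma quad_split {n : ℕ} (G : SimpleGraph (Fin n)) (y : Fin n → ℝ) (v : Fin n) :
    ∑ u, y u * ∑ w ∈ nbr G u, y w =
      ∑ u ∈ Finset.univ.erase v, y u * ∑ w ∈ (nbr G u).erase v, y w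
        + 2 * (y v * ∑ w ∈ nbr G v, y w) := by
  classical
  rw [← Finset.add_sum_erase Finset.univ _ (Finset.mem_univ v)]
  have h1 : ∀ u ∈ Finset.univ.erase v, y u * ∑ w ∈ nbr G u, y w =
      y u * ∑ w ∈ (nbr G u).erase v, y w + (if u ∈ nbr G v then y v * y u else 0) := by
    intro u _
    by_cases h : u ∈ nbr G v
    · have h' : v ∈ nbr G u := mem_nbr.mpr (mem_nbr.mp h).symm
      rw [if_pos h, ← Finset.add_sum_erase _ _ h']
      ring
    · have h' : v ∉ nbr G u := fun h' => h (mem_nbr.mpr (mem_nbr.mp h').symm)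
      rw [if_neg h, Finset.erase_eq_of_notMem h']
      ring
  rw [Finset.sum_congr rfl h1, Finset.sum_add_distrib, ← Finset.sum_filter]
  have h2 : (Finset.univ.erase v).filter (fun u => u ∈ nbr G v) = nbr G v := by
    ext u
    simp only [Finset.mem_filter, Finset.mem_erase, Finset.mem_univ, and_true, mem_nbr]
    constructor
    · exact fun h => h.2
    · exact fun h => ⟨h.ne', h⟩
  rw [h2, ← Finset.mul_sum]
  ring

lemma lam_rewire {n : ℕ} (G : SimpleGraph (Fin n)) (v : Fin n) (X : Finset (Fin n)) (hvX : v ∉ X)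
    (y : Fin n → ℝ) (hy : ∀ u, 0 ≤ y u) (hl : 0 < lam1 G)
    (hsub : ∀ v, lam1 G * y v ≤ ∑ w ∈ nbr G v, y w)
    (hX : ∑ w ∈ nbr G v, y w < ∑ w ∈ X, y w) : lam1 G < lam1 (rewire G v X) := by
  classical
  by_contra hc
  push Not at hc
  set L := lam1 G with hL
  set a := ∑ w ∈ nbr G v, y w with ha
  set b := ∑ w ∈ X, y w with hb
  set d := (b - a) / L with hd
  have hdpos : 0 < d := div_pos (by linarith) hl
  have hLd : L * d = b - a := by
    rw [hd]
    field_simp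
  set y' := Function.update y v (y v + d) with hy'
  have hyv : y' v = y v + d := by simp [hy']
  have hyu : ∀ u, u ≠ v → y' u = y u := fun u hu => by simp [hy', hu]
  have hnv : nbr (rewire G v X) v = X := by
    ext u
    simp only [mem_nbr, rewire]
    constructor
    · rintro (h | h | h)
      · exact absurd rfl h.1
      · exact h.2.2
      · exact absurd rfl h.2.1
    · intro h
      exact Or.inr (Or.inl ⟨trivial, fun h' => hvX (h' ▸ h), h⟩)
  have hnu : ∀ u, u ≠ v → (nbr (rewire G v X) u).erase v = (nbr G u).erase v := by
    intro u hu
    ext w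
    simp only [Finset.mem_erase, mem_nbr, rewire]
    tauto
  have hr := rayleigh (rewire G v X) y'
  rw [quad_split _ _ v, hnv, hyv, ← Finset.add_sum_erase Finset.univ _ (Finset.mem_univ v), hyv] at hr
  have e1 : ∑ u ∈ Finset.univ.erase v, y' u * ∑ w ∈ (nbr (rewire G v X) u).erase v, y' w
      = ∑ u ∈ Finset.univ.erase v, y u * ∑ w ∈ (nbr G u).erase v, y w := by
    apply Finset.sum_congr rfl
    intro u hu
    have hu' := Finset.ne_of_mem_erase hu
    rw [hyu u hu', hnu u hu']
    congr 1
    exact Finset.sum_congr rfl fun w hw => hyu w (Finset.ne_of_mem_erase hw)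
  have e2 : ∑ w ∈ X, y' w = b :=
    Finset.sum_congr rfl fun w hw => hyu w (fun h => hvX (h ▸ hw))
  have e3 : ∑ u ∈ Finset.univ.erase v, y' u ^ 2 = ∑ u ∈ Finset.univ.erase v, y u ^ 2 :=
    Finset.sum_congr rfl fun w hw => by rw [hyu w (Finset.ne_of_mem_erase hw)]
  rw [e1, e2, e3] at hr
  have hq : L * ∑ u, y u ^ 2 ≤ ∑ u, y u * ∑ w ∈ nbr G u, y w := by
    rw [Finset.mul_sum]
    apply Finset.sum_le_sum
    intro u _
    have := mul_le_mul_of_nonneg_left (hsub u) (hy u)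
    nlinarith
  rw [quad_split _ _ v, ← Finset.add_sum_erase Finset.univ _ (Finset.mem_univ v), ← ha] at hq
  set R := ∑ u ∈ Finset.univ.erase v, y u * ∑ w ∈ (nbr G u).erase v, y w
  set W := ∑ u ∈ Finset.univ.erase v, y u ^ 2 with hW
  have hWpos : 0 ≤ W := Finset.sum_nonneg fun u _ => sq_nonneg _
  have hs := hsub v
  rw [← ha] at hs
  have h1 : lam1 (rewire G v X) * ((y v + d) ^ 2 + W) ≤ L * ((y v + d) ^ 2 + W) :=
    mul_le_mul_of_nonneg_right hc (by positivity)
  have h2 : 0 ≤ y v * (b - a) := mul_nonneg (hy v) (by linarith)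
  have h3 : d * (L * y v) ≤ d * a := mul_le_mul_of_nonneg_left hs hdpos.le
  have h4 : L * d * d = (b - a) * d := by rw [hLd]
  have h5 : 0 < (b - a) * d := mul_pos (by linarith) hdpos
  nlinarith

lemma free_rewire {n k : ℕ} {G : SimpleGraph (Fin n)} (hG : WheelFree (2 * k + 1) G) (v : Fin n)
    (X S : Finset (Fin n)) (m : ℝ) (hm : 0 ≤ m)
    (hX : ∀ w ∈ X, (S.card : ℝ) - m ≤ degIn G S w)
    (hS : 2 * (k : ℝ) + 1 < S.card - 2 * k * m) : WheelFree (2 * k + 1) (rewire G v X) := by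
  classical
  rintro ⟨f, hf⟩
  by_cases hv : ∃ i, f i = v
  · obtain ⟨i0, hi0⟩ := hv
    set I := Finset.univ.image f with hI
    have hIc : I.card = 2 * k + 1 := by
      rw [hI, Finset.card_image_of_injective _ f.injective]
      simp
    have hvI : v ∈ I := by
      rw [← hi0]
      simp [hI]
    obtain ⟨Q, hQS, hadj, hQc⟩ := common G (I.erase v ∩ X) S m
      (fun a ha => hX a (Finset.mem_inter.mp ha).2)
    have hPc : ((I.erase v ∩ X).card : ℝ) ≤ 2 * k := by
      have h1 : (I.erase v ∩ X).card ≤ (I.erase v).card := Finset.card_le_card Finset.inter_subset_left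
      rw [Finset.card_erase_of_mem hvI, hIc] at h1
      have : (I.erase v ∩ X).card ≤ 2 * k := by omega
      exact_mod_cast this
    have h2 : I.card < Q.card := by
      have : 2 * (k : ℝ) + 1 < Q.card := by nlinarith
      rw [hIc]
      exact_mod_cast this
    obtain ⟨s, hsQ, hsI⟩ := Finset.exists_mem_notMem_of_card_lt_card h2
    have hsI' : ∀ i, f i ≠ s := fun i h => hsI (by rw [← h]; simp [hI])
    have hkey : ∀ i, (rewire G v X).Adj v (f i) → G.Adj (f i) s := by
      intro i h
      have h3 : f i ≠ v ∧ f i ∈ X := by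
        rcases h with h | h | h
        · exact absurd rfl h.1
        · exact h.2
        · exact absurd rfl h.2.1
      apply hadj _ _ s hsQ
      simp only [Finset.mem_inter, Finset.mem_erase]
      exact ⟨⟨h3.1, by simp [hI]⟩, h3.2⟩
    apply hG
    refine ⟨⟨Function.update f i0 s, ?_⟩, ?_⟩
    · intro i j hij
      by_cases hi : i = i0 <;> by_cases hj : j = i0
      · rw [hi, hj]
      · subst hi
        rw [Function.update_self, Function.update_of_ne hj] at hij
        exact absurd hij.symm (hsI' j)
      · subst hj
        rw [Function.update_self, Function.update_of_ne hi] at hij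
        exact absurd hij (hsI' i)
      · rw [Function.update_of_ne hi, Function.update_of_ne hj] at hij
        exact f.injective hij
    · intro i j hij
      show G.Adj (Function.update f i0 s i) (Function.update f i0 s j)
      have h := hf i j hij
      by_cases hi : i = i0 <;> by_cases hj : j = i0
      · exact absurd hij (by rw [hi, hj]; exact (wheelGraph _).loopless.irrefl _)
      · subst hi
        rw [Function.update_self, Function.update_of_ne hj]
        rw [hi0] at h
        exact (hkey j h).symm
      · subst hj
        rw [Function.update_self, Function.update_of_ne hi]
        rw [hi0] at h
        exact hkey i h.symm
      · rw [Function.update_of_ne hi, Function.update_of_ne hj]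
        rcases h with h | h | h
        · exact h.2.2
        · exact absurd (f.injective (h.1.trans hi0.symm)) hi
        · exact absurd (f.injective (h.1.trans hi0.symm)) hj
  · push Not at hv
    apply hG
    refine ⟨f, fun a b hab => ?_⟩
    rcases hf a b hab with h | h | h
    · exact h.2.2
    · exact absurd h.1 (hv a)
    · exact absurd h.1 (hv b)

lemma deg_large {n k : ℕ} (hk : 2 ≤ k) {G : SimpleGraph (Fin n)} {S T : Finset (Fin n)}
    (hG : IsSpexWheel (2 * k + 1) G) (hmax : IsMaxCut G S T)
    (hn : 1 < n) {s : ℝ} (hs : 0 < s)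
    (hcut : (n : ℝ) ^ 2 / 4 - s ^ 2 * n ^ 2 ≤ cutCount G S)
    (y : Fin n → ℝ) (z : Fin n) (hy : ∀ v, 0 ≤ y v) (h1 : ∀ v, y v ≤ 1) (hz : y z = 1)
    (hsub : ∀ v, lam1 G * y v ≤ ∑ w ∈ nbr G v, y w) (hzS : z ∈ S)
    (c : ℝ) (hc : c < ((n : ℝ) - 1) / 2 - (k + 1) * (s * n) - k - 1)
    (hbig : 2 * (k : ℝ) + 1 < n / 2 - s * n - 2 * k * (s * n)) (v : Fin n) :
    c < deg G v := by
  classical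
  by_contra hcon
  push Not at hcon
  have hn' : (1 : ℝ) < n := by exact_mod_cast hn
  have hlam := lam_ge (by omega) hk hG
  have hmax' := maxcut_symm hmax
  have hcut' : (n : ℝ) ^ 2 / 4 - s ^ 2 * n ^ 2 ≤ cutCount G T := by
    rw [hmax.1, cut_compl]
    exact hcut
  have hbad := bad_card hmax' (by omega) hs hcut'
  have hint := internal_small hk hG.1 hmax (by omega) hs hcut hzS
  have hsize := size_ge hmax hs hcut
  set X := (T \ badSet G T S s).erase v with hX
  have hXm : ∀ w ∈ X, w ∈ T ∧ w ∉ badSet G T S s := by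
    intro w hw
    exact Finset.mem_sdiff.mp (Finset.mem_of_mem_erase hw)
  have hfree : WheelFree (2 * k + 1) (rewire G v X) := by
    apply free_rewire hG.1 v X S (s * n) (by positivity)
    · intro w hw
      exact good_of (hXm w hw).1 (hXm w hw).2
    · linarith [hsize.1]
  have hle := hG.2 _ hfree
  have hsum_le : ∀ A : Finset (Fin n), ∑ w ∈ A, y w ≤ A.card := by
    intro A
    calc ∑ w ∈ A, y w ≤ ∑ w ∈ A, (1 : ℝ) := Finset.sum_le_sum fun w _ => h1 w
      _ = A.card := by simp
  have hlt : ∑ w ∈ nbr G v, y w < ∑ w ∈ X, y w := by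
    have ha := hsum_le (nbr G v)
    rw [← deg_eq] at ha
    have hzz := hsub z
    rw [hz, mul_one] at hzz
    have hcov : nbr G z ⊆ (S ∩ nbr G z) ∪ (badSet G T S s ∪ ({v} ∪ X)) := by
      intro w hw
      simp only [Finset.mem_union, Finset.mem_inter, hX, Finset.mem_erase, Finset.mem_sdiff,
        Finset.mem_singleton]
      by_cases hwS : w ∈ S
      · exact Or.inl ⟨hwS, hw⟩
      · have : w ∈ T := by
          rw [hmax.1, Finset.mem_compl]
          exact hwS
        tauto
    have hun : ∀ A B : Finset (Fin n), ∑ w ∈ A ∪ B, y w ≤ ∑ w ∈ A, y w + ∑ w ∈ B, y w := by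
      intro A B
      rw [← Finset.sum_union_inter]
      have : 0 ≤ ∑ w ∈ A ∩ B, y w := Finset.sum_nonneg fun w _ => hy w
      linarith
    have g1 : ∑ w ∈ nbr G z, y w ≤ ∑ w ∈ (S ∩ nbr G z) ∪ (badSet G T S s ∪ ({v} ∪ X)), y w :=
      Finset.sum_le_sum_of_subset_of_nonneg hcov fun w _ _ => hy w
    have g2 := hun (S ∩ nbr G z) (badSet G T S s ∪ ({v} ∪ X))
    have g3 := hun (badSet G T S s) ({v} ∪ X)
    have g4 := hun {v} X
    have g5 := hsum_le (S ∩ nbr G z)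
    have g6 := hsum_le (badSet G T S s)
    have g7 := h1 v
    rw [Finset.sum_singleton] at g4
    rw [degIn_eq] at hint
    linarith
  have := lam_rewire G v X (by simp [hX]) y hy (by linarith) hsub hlt
  linarith

lemma star_small {n k : ℕ} (hk : 2 ≤ k) {G : SimpleGraph (Fin n)} {S T : Finset (Fin n)}
    (hG : WheelFree (2 * k + 1) G) (m : ℝ)
    (hm : ∀ w ∈ S, (T.card : ℝ) - m ≤ degIn G T w) (hT : ((k : ℝ) + 1) * m + k ≤ T.card)
    {u : Fin n} (hu : u ∈ S) : degIn G S u ≤ k - 1 := by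
  classical
  by_contra hc
  have h1 : k ≤ (S ∩ nbr G u).card := by
    rw [← degIn_eq]
    omega
  obtain ⟨P, hP, hPc⟩ := Finset.exists_subset_card_eq h1
  have hPm : ∀ a ∈ P, a ∈ S ∧ G.Adj u a := by
    intro a ha
    have := hP ha
    simpa only [Finset.mem_inter, mem_nbr] using this
  have huP : u ∉ P := fun h => (hPm u h).2.ne rfl
  obtain ⟨Q, hQT, hadj, hQc⟩ := common G (insert u P) T m (by
    intro a ha
    rcases Finset.mem_insert.mp ha with rfl | ha
    · exact hm _ hu
    · exact hm _ (hPm a ha).1)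
  rw [Finset.card_insert_of_notMem huP, hPc] at hQc
  push_cast at hQc
  have hQ : (k : ℝ) ≤ Q.card := by linarith
  exact no_wheel hk hG u P Q hPc.ge (by exact_mod_cast hQ) (fun a ha => (hPm a ha).2)
    (fun b hb => hadj u (Finset.mem_insert_self _ _) b hb)
    (fun a ha b hb => hadj a (Finset.mem_insert_of_mem ha) b hb)

lemma no_star {n k : ℕ} (hk : 2 ≤ k) {G : SimpleGraph (Fin n)} {S : Finset (Fin n)}
    (h : ∀ u ∈ S, degIn G S u ≤ k - 1) :
    ¬ ContainsCopy (completeBipartiteGraph (Fin 1) (Fin k)) (G.induce (S : Set (Fin n))) := by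
  classical
  rintro ⟨f, hf⟩
  set u := f (Sum.inl 0) with hu
  have h1 := h u.1 u.2
  rw [degIn_eq] at h1
  have h2 : (Finset.univ : Finset (Fin k)).card ≤ (S ∩ nbr G u.1).card := by
    apply Finset.card_le_card_of_injOn (fun j => (f (Sum.inr j)).1)
    · intro j _
      simp only [Finset.mem_coe, Finset.mem_inter, mem_nbr]
      refine ⟨(f (Sum.inr j)).2, ?_⟩
      have := hf (Sum.inl 0) (Sum.inr j) (by simp [completeBipartiteGraph])
      simpa using this
    · intro i _ j _ hij
      have := f.injective (Subtype.ext hij)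
      simpa using this
  simp at h2
  omega

lemma arith_aux {k x t n b : ℝ} (hk : 2 ≤ k) (hx8 : 8 * (k + 1) ^ 2 ≤ x)
    (hnx : 10 * (k + 1) * x ≤ n) (g3 : (k + 1) * t = x / 4) (ht : 0 < t) (h : n / 2 - t ≤ b) :
    (k + 1) * (x + x / 4 + k) + k ≤ b := by
  have h1 : 2 * t ≤ k * t := by nlinarith
  have hxpos : 0 < x := by nlinarith
  have h2 : 2 * x ≤ k * x := by nlinarith
  have h3 := sq_nonneg k
  linarith

/-- Every vertex has degree greater than `(1/2 - 1/p)n`, and the two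
sides of a maximum cut induce `K_{1,k}`-free graphs; in particular all internal degrees
are at most `k - 1`. -/
theorem parts_star_free (k : ℕ) (hk : 2 ≤ k) :
    ∃ p₀ : ℕ, ∀ p : ℕ, p₀ ≤ p → ∃ N : ℕ, ∀ n : ℕ, N ≤ n →
      ∀ G : SimpleGraph (Fin n), IsSpexWheel (2 * k + 1) G →
      ∀ S T : Finset (Fin n), IsMaxCut G S T →
        (∀ v : Fin n, (1 / 2 - 1 / (p : ℝ)) * (n : ℝ) < (deg G v : ℝ)) ∧
        ¬ ContainsCopy (completeBipartiteGraph (Fin 1) (Fin k))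
            (G.induce (S : Set (Fin n))) ∧
        ¬ ContainsCopy (completeBipartiteGraph (Fin 1) (Fin k))
            (G.induce (T : Set (Fin n))) ∧
        (∀ u ∈ S, degIn G S u ≤ k - 1) ∧ (∀ u ∈ T, degIn G T u ≤ k - 1) := by
  classical
  refine ⟨10 * (k + 1), fun p hp => ?_⟩
  have hk' : (2 : ℝ) ≤ k := by exact_mod_cast hk
  have hp' : 10 * ((k : ℝ) + 1) ≤ p := by exact_mod_cast hp
  have hppos : (0 : ℝ) < p := by linarith
  set s : ℝ := 1 / (4 * p * (k + 1)) with hs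
  have hspos : 0 < s := by positivity
  obtain ⟨N1, hN1⟩ := kst k hk (s ^ 2 / 2) (by positivity)
  obtain ⟨N2, hN2⟩ := exists_nat_ge (1 / s ^ 2)
  refine ⟨N1 + N2 + 8 * (k + 1) ^ 2 * p, fun n hn G hG S T hmax => ?_⟩
  have hnN1 : N1 ≤ n := by omega
  have hnN2 : 1 / s ^ 2 ≤ (n : ℝ) := hN2.trans (by exact_mod_cast (by omega : N2 ≤ n))
  have hn3 : 8 * ((k : ℝ) + 1) ^ 2 * p ≤ n := by
    have : 8 * (k + 1) ^ 2 * p ≤ n := by omega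
    exact_mod_cast this
  have hn4 : 1 ≤ s ^ 2 * n := by
    rw [div_le_iff₀ (by positivity)] at hnN2
    linarith
  set x : ℝ := n / p with hx
  have hxp : x * p = n := by
    rw [hx]
    field_simp
  have hx8 : 8 * ((k : ℝ) + 1) ^ 2 ≤ x := by
    rw [hx, le_div_iff₀ hppos]
    exact hn3
  have hsn : 4 * ((k : ℝ) + 1) * (s * n) = x := by
    rw [hs, hx]
    field_simp
  set t : ℝ := s * n with ht
  have hxpos : 0 < x := by nlinarith
  have hnx : 10 * ((k : ℝ) + 1) * x ≤ n := by
    rw [← hxp]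
    nlinarith
  have hkx : 2 * x ≤ k * x := by nlinarith
  have hx16 : 16 * ((k : ℝ) + 1) ≤ x := by nlinarith
  have htpos : 0 < t := by nlinarith
  have hkt : 2 * t ≤ k * t := by nlinarith
  have hnbig : (1 : ℝ) < n := by nlinarith
  have hn1 : 1 < n := by exact_mod_cast hnbig
  have hlam := lam_ge (by omega) hk hG
  have hlam0 : 0 ≤ lam1 G := by linarith
  obtain ⟨y, z, hy, h1, hz, hsub⟩ := exists_sub (by omega) G hlam0
  have hcl := cut_large hmax _ y z hlam0 h1 hz hsub (hN1 n hnN1 G hG.1 z)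
  have hcut : (n : ℝ) ^ 2 / 4 - s ^ 2 * n ^ 2 ≤ cutCount G S := by
    have g1 : (((n : ℝ) - 1) / 2) ^ 2 ≤ lam1 G ^ 2 := by
      apply pow_le_pow_left₀ _ hlam
      linarith
    have g2 : (n : ℝ) ≤ s ^ 2 * n ^ 2 := by nlinarith
    nlinarith
  have hmax' := maxcut_symm hmax
  have hcut' : (n : ℝ) ^ 2 / 4 - s ^ 2 * n ^ 2 ≤ cutCount G T := by
    rw [hmax.1, cut_compl]
    exact hcut
  have hceq : (1 / 2 - 1 / (p : ℝ)) * (n : ℝ) = n / 2 - x := by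
    rw [hx]
    ring
  have hc : (1 / 2 - 1 / (p : ℝ)) * (n : ℝ) < ((n : ℝ) - 1) / 2 - (k + 1) * t - k - 1 := by
    rw [hceq]
    linarith
  have hbig : 2 * (k : ℝ) + 1 < n / 2 - t - 2 * k * t := by
    linarith
  have hdeg : ∀ v : Fin n, (1 / 2 - 1 / (p : ℝ)) * (n : ℝ) < (deg G v : ℝ) := by
    by_cases hzS : z ∈ S
    · exact deg_large hk hG hmax hn1 hspos hcut y z hy h1 hz hsub hzS _ hc hbig
    · have hzT : z ∈ T := by
        rw [hmax.1, Finset.mem_compl]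
        exact hzS
      exact deg_large hk hG hmax' hn1 hspos hcut' y z hy h1 hz hsub hzT _ hc hbig
  have hpart : ∀ A B : Finset (Fin n), IsMaxCut G A B →
      ((n : ℝ) ^ 2 / 4 - s ^ 2 * n ^ 2 ≤ cutCount G A) →
      ((n : ℝ) ^ 2 / 4 - s ^ 2 * n ^ 2 ≤ cutCount G B) → ∀ u ∈ A, degIn G A u ≤ k - 1 := by
    intro A B hAB hA hB u hu
    have hsz := size_ge (maxcut_symm hAB) hspos hB
    rw [← ht] at hsz
    refine star_small (T := B) hk hG.1 (x + (k + 1) * t + k) ?_ ?_ hu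
    · intro w hw
      have g1 := internal_small hk hG.1 hAB (by omega) hspos hA hw
      rw [← ht] at g1
      have g2 := hdeg w
      rw [hceq, deg_eq, ← degIn_add_compl G A w, ← hAB.1] at g2
      push_cast at g2
      linarith [hsz.2]
    · have g3 : ((k : ℝ) + 1) * t = x / 4 := by linarith
      rw [g3]
      exact arith_aux hk' hx8 hnx g3 htpos hsz.1
  have hS := hpart S T hmax hcut hcut'
  have hT := hpart T S hmax' hcut' hcut
  exact ⟨hdeg, no_star hk hS, no_star hk hT, hS, hT⟩
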